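/- arXiv:1311.7449 — 4 statements merged into one kernel-verified Lean document; each statement's English description precedes it below -/
import Mathlib

section
/- Let n, θ be integers with 2 ≤ θ ≤ n−1. There exists p_c ∈ (0,1) such that for every p with p_c < p ≤ 1 one has φ_{n,p,θ}(x) > x for every x ∈ (0,1), and x = 1 is the only solution of the equation φ_{n,p,θ}(x) = x in the interval [0,1]. -/
/-- `φ_{n,p,θ}(x) = p + (1-p) * ∑_{k=θ}^{n} C(n,k) x^k (1-x)^{n-k}`. -/
noncomputable def phiBP (n θ : ℕ) (p x : ℝ) : ℝ :=
  p + (1 - p) * ∑ k ∈ Finset.Icc θ n, (n.choose k : ℝ) * x ^ k * (1 - x) ^ (n - k)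

/-! For a binomial variable `S` with parameters `n` and `x`, the pointwise bound
`S ≤ (θ - 1) + (n - θ + 1) 𝟙{S ≥ θ}` has expectation `n x ≤ (θ - 1) + (n - θ + 1) P(S ≥ θ)`.
Substituting this lower bound for `P(S ≥ θ)` gives
`(n - θ + 1) (φ(x) - x) ≥ (1 - x) (n p - (θ - 1))`, which is positive for `x < 1` as soon as
`p > (θ - 1) / n`. -/

open Finset

section BinomialWeights

variable {R : Type*} [CommRing R] (n : ℕ) (x : R)

theorem sum_choose_mul_pow_mul_one_sub_pow :
    ∑ k ∈ range (n + 1), (n.choose k : R) * x ^ k * (1 - x) ^ (n - k) = 1 := by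
  simpa [bernsteinPolynomial, Polynomial.eval_finsetSum] using
    congrArg (Polynomial.eval x) (bernsteinPolynomial.sum R n)

theorem sum_natCast_mul_choose_mul_pow_mul_one_sub_pow :
    ∑ k ∈ range (n + 1), (k : R) * ((n.choose k : R) * x ^ k * (1 - x) ^ (n - k)) = n * x := by
  simpa [bernsteinPolynomial, Polynomial.eval_finsetSum] using
    congrArg (Polynomial.eval x) (bernsteinPolynomial.sum_smul R n)

end BinomialWeights

section OrderedRing

variable {R : Type*} [CommRing R] [LinearOrder R] [IsStrictOrderedRing R]

theorem sum_natCast_mul_le_add_upper_tail {n : ℕ} (θ : ℕ) {w : ℕ → R} (hw : ∀ k ≤ n, 0 ≤ w k) :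
    ∑ k ∈ range (n + 1), (k : R) * w k ≤
      (θ - 1) * ∑ k ∈ range (n + 1), w k + (n - θ + 1) * ∑ k ∈ Icc θ n, w k := by
  have tail_eq : Icc θ n = {k ∈ range (n + 1) | θ ≤ k} := by grind
  rw [tail_eq, sum_filter, mul_sum, mul_sum, ← sum_add_distrib]
  refine sum_le_sum fun k hk => ?_
  have hkn : k ≤ n := mem_range_succ_iff.mp hk
  split_ifs with hθk
  · calc (k : R) * w k ≤ n * w k := by gcongr; exact hw k hkn
      _ = (θ - 1) * w k + (n - θ + 1) * w k := by ring
  · have hkθ : (k : R) + 1 ≤ θ := by exact_mod_cast not_le.mp hθk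
    calc (k : R) * w k ≤ (θ - 1) * w k :=
          mul_le_mul_of_nonneg_right (le_sub_iff_add_le.mpr hkθ) (hw k hkn)
      _ = (θ - 1) * w k + (n - θ + 1) * 0 := by ring

theorem natCast_mul_le_add_binomial_upper_tail (n θ : ℕ) {x : R} (hx0 : 0 ≤ x) (hx1 : x ≤ 1) :
    n * x ≤ (θ - 1) +
      (n - θ + 1) * ∑ k ∈ Icc θ n, (n.choose k : R) * x ^ k * (1 - x) ^ (n - k) := by
  have weight_nonneg (k : ℕ) (_ : k ≤ n) : 0 ≤ (n.choose k : R) * x ^ k * (1 - x) ^ (n - k) :=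
    mul_nonneg (by positivity) (pow_nonneg (sub_nonneg.mpr hx1) _)
  simpa only [sum_natCast_mul_choose_mul_pow_mul_one_sub_pow,
    sum_choose_mul_pow_mul_one_sub_pow, mul_one] using
    sum_natCast_mul_le_add_upper_tail θ weight_nonneg

end OrderedRing

theorem lt_phiBP {n θ : ℕ} {p x : ℝ} (hp : (θ : ℝ) - 1 < n * p) (hp1 : p ≤ 1)
    (hx0 : 0 ≤ x) (hx1 : x < 1) : x < phiBP n θ p x := by
  have coeff_pos : (0 : ℝ) < n - θ + 1 := by
    linarith [mul_le_of_le_one_right n.cast_nonneg hp1]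
  have tail_bound := natCast_mul_le_add_binomial_upper_tail n θ hx0 hx1.le
  rw [← sub_pos, ← mul_pos_iff_of_pos_left coeff_pos, phiBP]
  set T := ∑ k ∈ Icc θ n, (n.choose k : ℝ) * x ^ k * (1 - x) ^ (n - k)
  calc 0 < (1 - x) * (n * p - (θ - 1)) := mul_pos (sub_pos.mpr hx1) (sub_pos.mpr hp)
    _ = (n - θ + 1) * (p - x) + (1 - p) * (n * x - (θ - 1)) := by ring
    _ ≤ (n - θ + 1) * (p - x) + (1 - p) * ((n - θ + 1) * T) := by
      gcongr
      exact sub_le_iff_le_add'.mpr tail_bound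
    _ = (n - θ + 1) * (p + (1 - p) * T - x) := by ring

theorem stmt_0_general (n θ : ℕ) (hθn : θ ≤ n) :
    ∃ pc : ℝ, 0 < pc ∧ pc < 1 ∧
      ∀ p : ℝ, pc < p → p ≤ 1 →
        (∀ x : ℝ, 0 < x → x < 1 → phiBP n θ p x > x) ∧
        (∀ x : ℝ, 0 ≤ x → x ≤ 1 → phiBP n θ p x = x → x = 1) := by
  have hθn' : (θ : ℝ) ≤ n := by exact_mod_cast hθn
  -- Unlike `(θ - 1) / n`, this larger threshold lies in `(0, 1)` for every `θ ≤ n`.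
  refine ⟨(θ + 1) / (n + 2), by positivity, (div_lt_one (by positivity)).mpr (by linarith),
    fun p hp hp1 => ?_⟩
  have threshold : (θ : ℝ) - 1 < n * p := by
    rw [div_lt_iff₀ (by positivity)] at hp
    linarith
  refine ⟨fun x hx0 hx1 => lt_phiBP threshold hp1 hx0.le hx1, fun x hx0 hx1 hfix => ?_⟩
  by_contra hne
  exact (lt_phiBP threshold hp1 hx0 (lt_of_le_of_ne hx1 hne)).ne' hfix

theorem stmt_0 (n θ : ℕ) (hθ : 2 ≤ θ) (hθn : θ < n) :
    ∃ pc : ℝ, 0 < pc ∧ pc < 1 ∧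
      ∀ p : ℝ, pc < p → p ≤ 1 →
        (∀ x : ℝ, 0 < x → x < 1 → phiBP n θ p x > x) ∧
        (∀ x : ℝ, 0 ≤ x → x ≤ 1 → phiBP n θ p x = x → x = 1) :=
  stmt_0_general n θ hθn.le
end

section
/- Let n, θ be integers with 2 ≤ θ ≤ n−1. There exists p* ∈ (0,1) such that for every p with p* < p < 1, the function Φ_p(x) := φ_{n,p,θ}(x) − x is strictly decreasing on [0,1]; consequently, for every such p, φ_{n,p,θ}(x) > x for all x ∈ (0,1). -/
/-!
The binomial tail is a polynomial, hence Lipschitz on `[0, 1]` with some constant `K`, so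
`φ_{n,p,θ}` is Lipschitz there with constant `|1 - p| * K`. For `p` close to `1` this is a
contraction, and a contraction minus the identity is strictly decreasing. Since `1` is a fixed
point of `φ_{n,p,θ}`, strict decrease forces `φ_{n,p,θ}(x) - x > 0` to the left of `1`.
-/

open Filter Set
open scoped NNReal Topology

theorem strictAntiOn_sub_id_of_lipschitzOnWith {f : ℝ → ℝ} {s : Set ℝ} {K : ℝ≥0}
    (hf : LipschitzOnWith K f s) (hK : K < 1) : StrictAntiOn (fun x ↦ f x - x) s := by
  intro x hx y hy hxy
  have h_contract : f y - f x < y - x :=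
    calc f y - f x ≤ dist (f y) (f x) := le_abs_self _
      _ ≤ K * dist y x := hf.dist_le_mul y hy x hx
      _ = K * (y - x) := by rw [Real.dist_eq, abs_of_pos (sub_pos.2 hxy)]
      _ < y - x := mul_lt_of_lt_one_left (sub_pos.2 hxy) hK
  linarith

theorem eventually_strictAntiOn_sub_id_of_lipschitzOnWith {f : ℝ → ℝ} {s : Set ℝ} {K : ℝ≥0}
    (hf : LipschitzOnWith K f s) :
    ∀ᶠ p in 𝓝 (1 : ℝ), StrictAntiOn (fun x ↦ p + (1 - p) * f x - x) s := by
  have h_small : ∀ᶠ p in 𝓝 (1 : ℝ), 0 + ‖1 - p‖₊ * K < 1 :=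
    ContinuousAt.eventually_lt (by fun_prop) continuousAt_const (by simp)
  filter_upwards [h_small] with p hp
  have h_lip : LipschitzOnWith (0 + ‖1 - p‖₊ * K) (fun x ↦ p + (1 - p) * f x) s :=
    (LipschitzWith.const p).lipschitzOnWith.add
      ((lipschitzWith_smul (1 - p)).comp_lipschitzOnWith hf)
  exact strictAntiOn_sub_id_of_lipschitzOnWith h_lip hp

/-- The tail `ℙ(Bin(n, x) ≥ θ)` of the binomial distribution, as a polynomial function of the
success probability `x`; it is the function that `phiBP` mixes with the constant `1`. -/
noncomputable def binomialTail (n θ : ℕ) (x : ℝ) : ℝ :=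
  ∑ k ∈ Finset.Icc θ n, (n.choose k : ℝ) * x ^ k * (1 - x) ^ (n - k)

section

variable {n θ : ℕ}

theorem contDiff_binomialTail {m : WithTop ℕ∞} : ContDiff ℝ m (binomialTail n θ) := by
  unfold binomialTail
  fun_prop

theorem exists_lipschitzOnWith_binomialTail (a b : ℝ) :
    ∃ K, LipschitzOnWith K (binomialTail n θ) (Icc a b) :=
  contDiff_binomialTail.contDiffOn.exists_lipschitzOnWith one_ne_zero (convex_Icc a b)
    isCompact_Icc

theorem binomialTail_one (hθ : θ ≤ n) : binomialTail n θ 1 = 1 := by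
  unfold binomialTail
  rw [Finset.sum_eq_single_of_mem n (Finset.right_mem_Icc.2 hθ)]
  · simp
  · intro k hk hkn
    have h_exp : n - k ≠ 0 := Nat.sub_ne_zero_of_lt ((Finset.mem_Icc.1 hk).2.lt_of_ne hkn)
    rw [sub_self, zero_pow h_exp, mul_zero]

theorem phiBP_one (hθ : θ ≤ n) (p : ℝ) : phiBP n θ p 1 = 1 := by
  change p + (1 - p) * binomialTail n θ 1 = 1
  rw [binomialTail_one hθ]
  ring

theorem eventually_strictAntiOn_phiBP_sub_id :
    ∀ᶠ p in 𝓝 (1 : ℝ), StrictAntiOn (fun x ↦ phiBP n θ p x - x) (Icc 0 1) :=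
  (exists_lipschitzOnWith_binomialTail 0 1).elim fun _ ↦
    eventually_strictAntiOn_sub_id_of_lipschitzOnWith

theorem lt_phiBP_of_strictAntiOn {p x : ℝ} (hθ : θ ≤ n)
    (h_anti : StrictAntiOn (fun x ↦ phiBP n θ p x - x) (Icc 0 1)) (hx : x ∈ Ico 0 1) :
    x < phiBP n θ p x := by
  have h_lt : phiBP n θ p 1 - 1 < phiBP n θ p x - x :=
    h_anti (Ico_subset_Icc_self hx) (right_mem_Icc.2 zero_le_one) hx.2
  rwa [phiBP_one hθ, sub_self, sub_pos] at h_lt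

theorem stmt_4_general (hθ : θ ≤ n) :
    ∀ᶠ p in 𝓝 (1 : ℝ), StrictAntiOn (fun x ↦ phiBP n θ p x - x) (Icc 0 1) ∧
      ∀ x ∈ Ico 0 1, x < phiBP n θ p x :=
  (eventually_strictAntiOn_phiBP_sub_id).mono fun _ h_anti ↦
    ⟨h_anti, fun _ ↦ lt_phiBP_of_strictAntiOn hθ h_anti⟩

end

theorem stmt_4 (n θ : ℕ) (hθ : 2 ≤ θ) (hθn : θ < n) :
    ∃ ps : ℝ, 0 < ps ∧ ps < 1 ∧
      ∀ p : ℝ, ps < p → p < 1 →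
        StrictAntiOn (fun x : ℝ => phiBP n θ p x - x) (Set.Icc 0 1) ∧
        (∀ x : ℝ, 0 < x → x < 1 → phiBP n θ p x > x) := by
  obtain ⟨ps, ⟨h_half, h_one⟩, h_sub⟩ :=
    exists_Ioc_subset_of_mem_nhds' (stmt_4_general hθn.le) one_half_lt_one
  exact ⟨ps, one_half_pos.trans_le h_half, h_one, fun p hp hp1 ↦
    (h_sub ⟨hp, hp1.le⟩).imp_right fun h_lt x hx0 hx1 ↦ h_lt x ⟨hx0.le, hx1⟩⟩
end

section
/- Let n, θ be integers with 2 ≤ θ ≤ n−1. There exists r ∈ (0,1) such that ∑_{k=θ}^{n} C(n,k)·r^k·(1−r)^{n−k} = r; that is, the function Φ_0(x) := ∑_{k=θ}^{n} C(n,k)·x^k·(1−x)^{n−k} − x has a root strictly between 0 and 1. -/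
/-!
The binomial tail `T x = ∑_{k=θ}^n C(n,k) x^k (1-x)^(n-k)` fixes `0` and `1`. Its derivative
telescopes to `n C(n-1,θ-1) x^(θ-1) (1-x)^(n-θ)`, which vanishes at both endpoints because
`1 < θ < n`. Hence `T` lies below the diagonal just to the right of `0` and above it just to the
left of `1`, so it crosses the diagonal in between.
-/

open Set Topology
open scoped Polynomial

section Crossing

variable {f g : ℝ → ℝ} {f' g' a b : ℝ}

lemma eventually_nhdsGT_lt_of_hasDerivWithinAt_lt (hf : HasDerivWithinAt f f' (Ioi a) a)
    (hg : HasDerivWithinAt g g' (Ioi a) a) (hfg : f a = g a) (hlt : f' < g') :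
    ∀ᶠ x in 𝓝[>] a, f x < g x := by
  have hslope := (hf.sub hg).limsup_slope_le' self_notMem_Ioi (sub_neg.mpr hlt)
  filter_upwards [hslope, self_mem_nhdsWithin] with x hx (hax : a < x)
  simpa [slope_def_field, hfg, div_neg_iff, hax, hax.not_gt] using hx

lemma eventually_nhdsLT_lt_of_hasDerivWithinAt_lt (hf : HasDerivWithinAt f f' (Iio a) a)
    (hg : HasDerivWithinAt g g' (Iio a) a) (hfg : f a = g a) (hlt : f' < g') :
    ∀ᶠ x in 𝓝[<] a, g x < f x := by
  have hslope := (hf.sub hg).limsup_slope_le' self_notMem_Iio (sub_neg.mpr hlt)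
  filter_upwards [hslope, self_mem_nhdsWithin] with x hx (hxa : x < a)
  simpa [slope_def_field, hfg, div_neg_iff, hxa, hxa.not_gt] using hx

lemma exists_mem_Ioo_eq_of_hasDerivWithinAt_lt {f'a g'a f'b g'b : ℝ} (hab : a < b)
    (hf : ContinuousOn f (Ioo a b)) (hg : ContinuousOn g (Ioo a b))
    (hfa : HasDerivWithinAt f f'a (Ioi a) a) (hga : HasDerivWithinAt g g'a (Ioi a) a)
    (hfb : HasDerivWithinAt f f'b (Iio b) b) (hgb : HasDerivWithinAt g g'b (Iio b) b)
    (ha : f a = g a) (hb : f b = g b) (ha' : f'a < g'a) (hb' : f'b < g'b) :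
    ∃ c ∈ Ioo a b, f c = g c := by
  have hbelow := eventually_nhdsGT_lt_of_hasDerivWithinAt_lt hfa hga ha ha'
  have habove := eventually_nhdsLT_lt_of_hasDerivWithinAt_lt hfb hgb hb hb'
  exact isPreconnected_Ioo.intermediate_value₂_eventually₂
    (Filter.le_principal_iff.mpr (Ioo_mem_nhdsGT hab))
    (Filter.le_principal_iff.mpr (Ioo_mem_nhdsLT hab)) hf hg
    (hbelow.mono fun _ ↦ le_of_lt) (habove.mono fun _ ↦ le_of_lt)

end Crossing

section BernsteinTail

variable (R : Type*) [CommRing R]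

/-- The upper tail `∑_{ν=θ}^n C(n,ν) X^ν (1-X)^(n-ν)` of the Bernstein partition of unity. At a real
`x ∈ [0, 1]` it is the probability that a binomial variable with parameters `n`, `x` is at least
`θ`. -/
noncomputable def bernsteinTail (n θ : ℕ) : R[X] :=
  ∑ ν ∈ Finset.Icc θ n, bernsteinPolynomial R n ν

lemma eval_bernsteinTail (n θ : ℕ) (x : R) :
    (bernsteinTail R n θ).eval x =
      ∑ k ∈ Finset.Icc θ n, (n.choose k : R) * x ^ k * (1 - x) ^ (n - k) := by
  simp [bernsteinTail, bernsteinPolynomial, Polynomial.eval_finsetSum]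

lemma eval_zero_bernsteinTail (n θ : ℕ) :
    (bernsteinTail R n θ).eval 0 = if θ = 0 then 1 else 0 := by
  simp [bernsteinTail, Polynomial.eval_finsetSum, bernsteinPolynomial.eval_at_0]

lemma eval_one_bernsteinTail (n θ : ℕ) :
    (bernsteinTail R n θ).eval 1 = if θ ≤ n then 1 else 0 := by
  simp [bernsteinTail, Polynomial.eval_finsetSum, bernsteinPolynomial.eval_at_1]

lemma derivative_bernsteinTail_succ (n θ : ℕ) :
    Polynomial.derivative (bernsteinTail R n (θ + 1)) = n * bernsteinPolynomial R (n - 1) θ := by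
  rcases n with _ | n
  · simp [bernsteinTail]
  rcases lt_or_ge n θ with hnθ | hθn
  · simp [bernsteinTail, hnθ, bernsteinPolynomial.eq_zero_of_lt]
  calc Polynomial.derivative (bernsteinTail R (n + 1) (θ + 1))
      = ∑ ν ∈ Finset.Ico θ (n + 1),
          Polynomial.derivative (bernsteinPolynomial R (n + 1) (ν + 1)) := by
        rw [bernsteinTail, Polynomial.derivative_sum, ← Finset.Ico_add_one_right_eq_Icc,
          Finset.sum_Ico_add' (fun ν ↦ Polynomial.derivative (bernsteinPolynomial R (n + 1) ν))]
    _ = (n + 1 : ℕ) * ∑ ν ∈ Finset.Ico θ (n + 1),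
          (bernsteinPolynomial R n ν - bernsteinPolynomial R n (ν + 1)) := by
        simp only [bernsteinPolynomial.derivative_succ, Finset.mul_sum, Nat.add_sub_cancel]
    _ = (n + 1 : ℕ) * bernsteinPolynomial R n θ := by
        simp only [← neg_sub (bernsteinPolynomial R n (_ + 1)), Finset.sum_neg_distrib]
        rw [Finset.sum_Ico_sub _ (by lia), bernsteinPolynomial.eq_zero_of_lt R n.lt_succ_self,
          zero_sub, neg_neg]

end BernsteinTail

theorem stmt_6 (n θ : ℕ) (hθ : 2 ≤ θ) (hθn : θ < n) :
    ∃ r : ℝ, 0 < r ∧ r < 1 ∧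
      ∑ k ∈ Finset.Icc θ n, (n.choose k : ℝ) * r ^ k * (1 - r) ^ (n - k) = r := by
  obtain ⟨m, rfl⟩ : ∃ m, θ = m + 1 := ⟨θ - 1, by lia⟩
  set T := bernsteinTail ℝ n (m + 1)
  have hT₀ : T.eval 0 = 0 := by simp [T, eval_zero_bernsteinTail]
  have hT₁ : T.eval 1 = 1 := by simp [T, eval_one_bernsteinTail, hθn.le]
  have hT'₀ : T.derivative.eval 0 < 1 := by
    have hm : m ≠ 0 := by lia
    simp [T, derivative_bernsteinTail_succ, bernsteinPolynomial.eval_at_0, hm]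
  have hT'₁ : T.derivative.eval 1 < 1 := by
    have hm : m ≠ n - 1 := by lia
    simp [T, derivative_bernsteinTail_succ, bernsteinPolynomial.eval_at_1, hm]
  obtain ⟨r, ⟨hr₀, hr₁⟩, hr⟩ := exists_mem_Ioo_eq_of_hasDerivWithinAt_lt zero_lt_one
    T.continuousOn continuousOn_id
    (T.hasDerivAt 0).hasDerivWithinAt (hasDerivWithinAt_id 0 _)
    (T.hasDerivAt 1).hasDerivWithinAt (hasDerivWithinAt_id 1 _) hT₀ hT₁ hT'₀ hT'₁
  exact ⟨r, hr₀, hr₁, (eval_bernsteinTail ℝ n (m + 1) r).symm.trans hr⟩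
end

section
/- Let n, θ be integers with 2 ≤ θ ≤ n−1 and define p_c := inf{ p ∈ (0,1) : φ_{n,p,θ}(x) > x for every x ∈ (0,1) }. Then 0 < p_c < 1, and for every p ∈ [0, p_c] the equation φ_{n,p,θ}(x) = x has at least one solution x ∈ (0,1). -/
/-!
Let `h(x) = P(Bin(n, x) < θ) / (1 - x)`, a polynomial in `x`. Then
`φ_{n,p,θ}(x) - x = (1 - x) (1 - (1 - p) h(x))`, so on `(0, 1)` the graph of `φ_{n,p,θ}` lies above
the diagonal where `(1 - p) h < 1` and meets it where `(1 - p) h = 1`. On `[0, 1]` the function `h`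
increases with `θ`, and for `θ = 2` it is `(1 - x)^(n - 2) (1 + (n - 1) x) = 1 + x + O(x^2)`; hence
`h > 1` just to the right of `0`. Since `h(0) = 1` and `h(1) = 0`, the maximum `M > 1` of `h` over
`[0, 1]` is attained in the interior. Hence `p_c = 1 - 1 / M`, and for `p ≤ p_c` the function
`(1 - p) h` passes from a value `≥ 1` at the maximum point to the value `0` at `1`.
-/

open Set

section LowerTailQuotient

/-- The polynomial `P(Bin(n, x) < θ) / (1 - x)` for `θ ≤ n`, with the division carried out termwise
so that it also has its limiting value at `x = 1`. -/
noncomputable def lowerTailQuotient (n θ : ℕ) (x : ℝ) : ℝ :=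
  ∑ k ∈ Finset.range θ, (n.choose k : ℝ) * x ^ k * (1 - x) ^ (n - 1 - k)

variable {n θ : ℕ} {x : ℝ}

theorem sum_range_add_sum_Icc_choose_mul_pow_mul_one_sub_pow {R : Type*} [CommRing R]
    (hθ : θ ≤ n + 1) (x : R) :
    ∑ k ∈ Finset.range θ, (n.choose k : R) * x ^ k * (1 - x) ^ (n - k) +
      ∑ k ∈ Finset.Icc θ n, (n.choose k : R) * x ^ k * (1 - x) ^ (n - k) = 1 := by
  have binomial := add_pow x (1 - x) n
  rw [add_sub_cancel, one_pow] at binomial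
  rw [← Finset.Ico_add_one_right_eq_Icc, Finset.sum_range_add_sum_Ico _ hθ]
  exact (Finset.sum_congr rfl fun k _ ↦ by ring).trans binomial.symm

theorem one_sub_mul_lowerTailQuotient (hθ : θ ≤ n) (x : ℝ) :
    (1 - x) * lowerTailQuotient n θ x =
      ∑ k ∈ Finset.range θ, (n.choose k : ℝ) * x ^ k * (1 - x) ^ (n - k) := by
  rw [lowerTailQuotient, Finset.mul_sum]
  refine Finset.sum_congr rfl fun k hk ↦ ?_
  have hkθ : k < θ := Finset.mem_range.mp hk
  rw [show n - k = n - 1 - k + 1 by lia, pow_succ]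
  ring

theorem continuous_lowerTailQuotient (n θ : ℕ) : Continuous (lowerTailQuotient n θ) := by
  unfold lowerTailQuotient
  fun_prop

theorem lowerTailQuotient_zero (hθ : 0 < θ) : lowerTailQuotient n θ 0 = 1 := by
  rw [lowerTailQuotient, Finset.sum_eq_single_of_mem 0 (Finset.mem_range.mpr hθ)]
  · simp
  · intro k _ hk
    simp [hk]

theorem lowerTailQuotient_one (hθ : θ < n) : lowerTailQuotient n θ 1 = 0 := by
  refine Finset.sum_eq_zero fun k hk ↦ ?_
  have hkθ : k < θ := Finset.mem_range.mp hk
  rw [sub_self, zero_pow (by lia), mul_zero]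

theorem monotone_lowerTailQuotient (n : ℕ) (hx : x ∈ Icc (0 : ℝ) 1) :
    Monotone fun θ ↦ lowerTailQuotient n θ x := by
  intro θ θ' hle
  have hx₀ : 0 ≤ x := hx.1
  have hx₁ : 0 ≤ 1 - x := sub_nonneg.mpr hx.2
  exact Finset.sum_le_sum_of_subset_of_nonneg (Finset.range_mono hle) fun k _ _ ↦ by positivity

theorem lowerTailQuotient_add_two_two (n : ℕ) (x : ℝ) :
    lowerTailQuotient (n + 2) 2 x = (1 - x) ^ n * (1 + (n + 1) * x) := by
  simp only [lowerTailQuotient, Finset.sum_range_succ, Finset.sum_range_zero, Nat.choose_zero_right,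
    Nat.choose_one_right, Nat.add_sub_cancel, show n + 2 - 1 = n + 1 by lia]
  push_cast
  ring

theorem one_lt_lowerTailQuotient_add_two_two (hx₀ : 0 < x) (hx₁ : x ≤ 1)
    (hx : n * (n + 1) * x < 1) : 1 < lowerTailQuotient (n + 2) 2 x := by
  have bernoulli : 1 - n * x ≤ (1 - x) ^ n := by
    simpa [sub_eq_add_neg] using one_add_mul_le_pow (a := -x) (by linarith) n
  calc
    1 < 1 + x * (1 - n * (n + 1) * x) := lt_add_of_pos_right 1 (mul_pos hx₀ (sub_pos.mpr hx))
    _ = (1 - n * x) * (1 + (n + 1) * x) := by ring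
    _ ≤ (1 - x) ^ n * (1 + (n + 1) * x) := by gcongr
    _ = lowerTailQuotient (n + 2) 2 x := (lowerTailQuotient_add_two_two n x).symm

theorem exists_one_lt_lowerTailQuotient (hn : 2 ≤ n) (hθ : 2 ≤ θ) :
    ∃ x ∈ Ioo (0 : ℝ) 1, 1 < lowerTailQuotient n θ x := by
  obtain ⟨m, rfl⟩ := Nat.exists_eq_add_of_le' hn
  set x : ℝ := 1 / (m + 2) ^ 2 with hx
  have hx₀ : 0 < x := by positivity
  have hx₁ : x < 1 := by
    rw [hx, div_lt_one (by positivity)]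
    exact one_lt_pow₀ (by linarith [m.cast_nonneg (α := ℝ)]) two_ne_zero
  have hmx : m * (m + 1) * x < 1 := by
    rw [hx, mul_one_div, div_lt_one (by positivity)]
    nlinarith
  exact ⟨x, ⟨hx₀, hx₁⟩, (one_lt_lowerTailQuotient_add_two_two hx₀ hx₁.le hmx).trans_le
    (monotone_lowerTailQuotient _ ⟨hx₀.le, hx₁.le⟩ hθ)⟩

theorem exists_isMaxOn_lowerTailQuotient (hθ : 2 ≤ θ) (hθn : θ < n) :
    ∃ c ∈ Ioo (0 : ℝ) 1,
      IsMaxOn (lowerTailQuotient n θ) (Ioo 0 1) c ∧ 1 < lowerTailQuotient n θ c := by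
  obtain ⟨y, hy, hy_lt⟩ := exists_one_lt_lowerTailQuotient (hθ.trans hθn.le) hθ
  have endpoint_lt : ∀ z ∈ Icc (0 : ℝ) 1 \ Ioo 0 1,
      lowerTailQuotient n θ z < lowerTailQuotient n θ y := by
    rw [Icc_sdiff_Ioo_same zero_le_one]
    rintro z (rfl | rfl)
    · rwa [lowerTailQuotient_zero (by lia)]
    · rw [lowerTailQuotient_one hθn]
      linarith
  obtain ⟨c, hc, hmax⟩ := isCompact_Icc.exists_isMaxOn_mem_subset
    (continuous_lowerTailQuotient n θ).continuousOn (Ioo_subset_Icc_self hy) endpoint_lt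
  exact ⟨c, hc, hmax.on_subset Ioo_subset_Icc_self,
    hy_lt.trans_le (hmax (Ioo_subset_Icc_self hy))⟩

end LowerTailQuotient

section FixedPoints

variable {n θ : ℕ} {p x c : ℝ}

theorem phiBP_sub_self (hθ : θ ≤ n) (p x : ℝ) :
    phiBP n θ p x - x = (1 - x) * (1 - (1 - p) * lowerTailQuotient n θ x) := by
  have total := sum_range_add_sum_Icc_choose_mul_pow_mul_one_sub_pow (hθ.trans n.le_succ) x
  rw [← one_sub_mul_lowerTailQuotient hθ] at total
  unfold phiBP
  linear_combination (1 - p) * total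

theorem phiBP_eq_self_iff (hθ : θ ≤ n) (hx : x < 1) :
    phiBP n θ p x = x ↔ (1 - p) * lowerTailQuotient n θ x = 1 := by
  rw [← sub_eq_zero, phiBP_sub_self hθ, mul_eq_zero_iff_left (sub_pos.mpr hx).ne', sub_eq_zero,
    eq_comm]

theorem lt_phiBP_iff (hθ : θ ≤ n) (hx : x < 1) :
    x < phiBP n θ p x ↔ (1 - p) * lowerTailQuotient n θ x < 1 := by
  rw [← sub_pos, phiBP_sub_self hθ, mul_pos_iff_of_pos_left (sub_pos.mpr hx), sub_pos]

theorem forall_lt_phiBP_iff (hθ : θ ≤ n) (hc : c ∈ Ioo (0 : ℝ) 1)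
    (hmax : IsMaxOn (lowerTailQuotient n θ) (Ioo 0 1) c) (hpos : 0 < lowerTailQuotient n θ c)
    (hp : p ≤ 1) :
    (∀ x ∈ Ioo (0 : ℝ) 1, x < phiBP n θ p x) ↔ 1 - (lowerTailQuotient n θ c)⁻¹ < p := by
  calc
    (∀ x ∈ Ioo (0 : ℝ) 1, x < phiBP n θ p x)
      ↔ ∀ x ∈ Ioo (0 : ℝ) 1, (1 - p) * lowerTailQuotient n θ x < 1 :=
        forall₂_congr fun x hx ↦ lt_phiBP_iff hθ hx.2
    _ ↔ (1 - p) * lowerTailQuotient n θ c < 1 :=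
        ⟨fun h ↦ h c hc, fun h x hx ↦
          (mul_le_mul_of_nonneg_left (hmax hx) (sub_nonneg.mpr hp)).trans_lt h⟩
    _ ↔ 1 - (lowerTailQuotient n θ c)⁻¹ < p := by rw [← lt_inv_mul_iff₀' hpos, mul_one, sub_lt_comm]

theorem sInf_setOf_forall_lt_phiBP (hθ : θ ≤ n) (hc : c ∈ Ioo (0 : ℝ) 1)
    (hmax : IsMaxOn (lowerTailQuotient n θ) (Ioo 0 1) c) (hc_ge : 1 ≤ lowerTailQuotient n θ c) :
    sInf {p : ℝ | 0 < p ∧ p < 1 ∧ ∀ x : ℝ, 0 < x → x < 1 → phiBP n θ p x > x} =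
      1 - (lowerTailQuotient n θ c)⁻¹ := by
  have hpos : 0 < lowerTailQuotient n θ c := zero_lt_one.trans_le hc_ge
  have hinv_le : (lowerTailQuotient n θ c)⁻¹ ≤ 1 := inv_le_one_of_one_le₀ hc_ge
  have hinv_pos : 0 < (lowerTailQuotient n θ c)⁻¹ := inv_pos.mpr hpos
  have supercritical_eq :
      {p : ℝ | 0 < p ∧ p < 1 ∧ ∀ x : ℝ, 0 < x → x < 1 → phiBP n θ p x > x} =
        Ioo (1 - (lowerTailQuotient n θ c)⁻¹) 1 := by
    ext p
    constructor
    · rintro ⟨-, hp, h⟩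
      exact ⟨(forall_lt_phiBP_iff hθ hc hmax hpos hp.le).mp fun x hx ↦ h x hx.1 hx.2, hp⟩
    · rintro ⟨hcp, hp⟩
      exact ⟨by linarith, hp, fun x hx₀ hx₁ ↦
        (forall_lt_phiBP_iff hθ hc hmax hpos hp.le).mpr hcp x ⟨hx₀, hx₁⟩⟩
  rw [supercritical_eq, csInf_Ioo (by linarith)]

theorem exists_phiBP_eq_self (hθ : θ < n) (hc : c ∈ Ioo (0 : ℝ) 1)
    (hpos : 0 < lowerTailQuotient n θ c) (hp : p ≤ 1 - (lowerTailQuotient n θ c)⁻¹) :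
    ∃ x ∈ Ioo (0 : ℝ) 1, phiBP n θ p x = x := by
  have one_le_at_c : 1 ≤ (1 - p) * lowerTailQuotient n θ c :=
    (inv_le_iff_one_le_mul₀ hpos).mp (le_sub_comm.mp hp)
  have lt_one_at_one : (1 - p) * lowerTailQuotient n θ 1 < 1 := by
    rw [lowerTailQuotient_one hθ, mul_zero]
    exact zero_lt_one
  obtain ⟨x, hx, hx_eq⟩ := intermediate_value_Ico' hc.2.le
    ((continuous_lowerTailQuotient n θ).const_mul (1 - p)).continuousOn
    ⟨lt_one_at_one, one_le_at_c⟩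
  exact ⟨x, ⟨hc.1.trans_le hx.1, hx.2⟩, (phiBP_eq_self_iff hθ.le hx.2).mpr hx_eq⟩

end FixedPoints

theorem stmt_8 (n θ : ℕ) (hθ : 2 ≤ θ) (hθn : θ < n)
    (pc : ℝ)
    (hpc : pc = sInf {p : ℝ | 0 < p ∧ p < 1 ∧ ∀ x : ℝ, 0 < x → x < 1 → phiBP n θ p x > x}) :
    0 < pc ∧ pc < 1 ∧
    ∀ p : ℝ, 0 ≤ p → p ≤ pc → ∃ x : ℝ, 0 < x ∧ x < 1 ∧ phiBP n θ p x = x := by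
  obtain ⟨c, hc, hmax, hc_gt⟩ := exists_isMaxOn_lowerTailQuotient hθ hθn
  have hpos : 0 < lowerTailQuotient n θ c := zero_lt_one.trans hc_gt
  rw [sInf_setOf_forall_lt_phiBP hθn.le hc hmax hc_gt.le] at hpc
  subst hpc
  refine ⟨sub_pos.mpr (inv_lt_one_of_one_lt₀ hc_gt), sub_lt_self _ (inv_pos.mpr hpos), ?_⟩
  intro p _ hp
  obtain ⟨x, ⟨hx₀, hx₁⟩, hx⟩ := exists_phiBP_eq_self hθn hc hpos hp
  exact ⟨x, hx₀, hx₁, hx⟩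
end
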